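/- Let Z, Z₁, W, W₁ ∈ Ĥ₂. There exists a symplectic transformation M ∈ Ω̂₂ with M<Z> = W and M<Z₁> = W₁ if and only if the cross ratios 𝔯(Z,Z₁) and 𝔯(W,W₁) have the same eigenvalues (equivalently, the same characteristic polynomial). -/

import Mathlib

open Matrix Complex

noncomputable section

abbrev Mat2 : Type := Matrix (Fin 2) (Fin 2) ℂ
abbrev Mat2R : Type := Matrix (Fin 2) (Fin 2) ℝ
abbrev Mat4 : Type := Matrix (Fin 2 ⊕ Fin 2) (Fin 2 ⊕ Fin 2) ℝ

/-- `q = [[0,1],[1,0]]`. -/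
def qR : Mat2R := !![0, 1; 1, 0]

/-- `J = [[0, I₂],[−I₂, 0]]` (4×4). -/
def Jmat : Mat4 := Matrix.fromBlocks 0 1 (-1) 0

/-- `Q = diag(q, q)` (4×4). -/
def Qmat : Mat4 := Matrix.fromBlocks qR 0 0 qR

/-- `Ω₂ = Sp(4,ℝ) = {M : ᵗM J M = J}`. -/
def Omega2 : Set Mat4 := {M | Mᵀ * Jmat * M = Jmat}

/-- The new Siegel upper half space `Ĥ₂`: bi-symmetric `Z = [[τ,z],[z,τ]]` with `Im τ > |Im z|`. -/
def Hhat : Set Mat2 :=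
  {Z | Z 1 1 = Z 0 0 ∧ Z 1 0 = Z 0 1 ∧ |(Z 0 1).im| < (Z 0 0).im}

/-- The action `M<Z> = (AZ+B)(CZ+D)⁻¹` of a real 4×4 matrix in 2×2 blocks on `Z ∈ ℂ^{2×2}`. -/
def act (M : Mat4) (Z : Mat2) : Mat2 :=
  (M.toBlocks₁₁.map Complex.ofReal * Z + M.toBlocks₁₂.map Complex.ofReal) *
    (M.toBlocks₂₁.map Complex.ofReal * Z + M.toBlocks₂₂.map Complex.ofReal)⁻¹

/-- `Ω̂₂ = {M ∈ Ω₂ : M<Z> ∈ Ĥ₂ for all Z ∈ Ĥ₂}`. -/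
def OmegaHat : Set Mat4 := {M | M ∈ Omega2 ∧ ∀ Z ∈ Hhat, act M Z ∈ Hhat}

/-- Entrywise complex conjugation of a matrix. -/
def conjM (Z : Mat2) : Mat2 := Z.map (starRingEnd ℂ)

/-- The cross ratio `𝔯(Z,Z₁) = (Z−Z₁)(Z−conj Z₁)⁻¹(conj Z−conj Z₁)(conj Z−Z₁)⁻¹`. -/
def crossRatio (Z Z₁ : Mat2) : Mat2 :=
  (Z - Z₁) * (Z - conjM Z₁)⁻¹ * (conjM Z - conjM Z₁) * (conjM Z - Z₁)⁻¹

/-!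
A bi-symmetric matrix is determined by its two eigenvalues, so `Ĥ₂` is a product `ℍ × ℍ` of two
upper half planes on which two copies of `SL(2, ℝ)` and the exchange of the factors act through
`Ω̂₂`. The cross ratio is changed only by conjugation under `Sp(4, ℝ)`, and its eigenvalues at
bi-symmetric points are `tanh² (d / 2)` for the hyperbolic distances `d` in the two factors. Equal
characteristic polynomials therefore mean equal pairs of distances up to order, and `SL(2, ℝ)`
carries any two points of `ℍ` to any two points at the same distance.
-/

open SymplecticGroup
open scoped MatrixGroups ComplexConjugate UpperHalfPlane

section Mobius

variable {l R S : Type*} [Fintype l] [CommRing R] [CommRing S]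

/-- The numerator `A Z + B` of the fractional linear action of `M = [[A, B], [C, D]]`. -/
def mobiusNum (M : Matrix (l ⊕ l) (l ⊕ l) R) (Z : Matrix l l R) : Matrix l l R :=
  M.toBlocks₁₁ * Z + M.toBlocks₁₂

/-- The denominator `C Z + D` of the fractional linear action of `M = [[A, B], [C, D]]`. -/
def mobiusDenom (M : Matrix (l ⊕ l) (l ⊕ l) R) (Z : Matrix l l R) : Matrix l l R :=
  M.toBlocks₂₁ * Z + M.toBlocks₂₂

lemma mobiusNum_map (f : R →+* S) (M : Matrix (l ⊕ l) (l ⊕ l) R) (Z : Matrix l l R) :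
    mobiusNum (M.map f) (Z.map f) = (mobiusNum M Z).map f := by
  ext i j
  simp [mobiusNum, mul_apply, toBlocks₁₁, toBlocks₁₂]

lemma mobiusDenom_map (f : R →+* S) (M : Matrix (l ⊕ l) (l ⊕ l) R) (Z : Matrix l l R) :
    mobiusDenom (M.map f) (Z.map f) = (mobiusDenom M Z).map f := by
  ext i j
  simp [mobiusDenom, mul_apply, toBlocks₂₁, toBlocks₂₂]

variable [DecidableEq l]

/-- The fractional linear action `(A Z + B)(C Z + D)⁻¹`, over any commutative ring; it is `0` when
`C Z + D` is singular. -/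
def mobius (M : Matrix (l ⊕ l) (l ⊕ l) R) (Z : Matrix l l R) : Matrix l l R :=
  mobiusNum M Z * (mobiusDenom M Z)⁻¹

/-- The cross ratio `(X - A)(X - B)⁻¹(Y - B)(Y - A)⁻¹` of four square matrices. -/
def matrixCrossRatio (X Y A B : Matrix l l R) : Matrix l l R :=
  (X - A) * (X - B)⁻¹ * (Y - B) * (Y - A)⁻¹

/-- The matrix `[Z; 1]`, homogeneous coordinates for `Z`: fractional linear maps act on it by left
multiplication, up to an invertible factor on the right. -/
def frame (Z : Matrix l l R) : Matrix (l ⊕ l) l R := fromRows Z 1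

lemma mul_frame (M : Matrix (l ⊕ l) (l ⊕ l) R) (Z : Matrix l l R) :
    M * frame Z = fromRows (mobiusNum M Z) (mobiusDenom M Z) := by
  conv_lhs => rw [← fromBlocks_toBlocks M, frame, fromBlocks_mul_fromRows, mul_one, mul_one]
  rfl

lemma frame_mobius_mul (M : Matrix (l ⊕ l) (l ⊕ l) R) {Z : Matrix l l R}
    (hZ : IsUnit (mobiusDenom M Z).det) : frame (mobius M Z) * mobiusDenom M Z = M * frame Z := by
  rw [mul_frame, frame, fromRows_mul, one_mul, mobius, nonsing_inv_mul_cancel_right _ _ hZ]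

lemma mobius_mul (M N : Matrix (l ⊕ l) (l ⊕ l) R) {Z : Matrix l l R}
    (hZ : IsUnit (mobiusDenom N Z).det) : mobius (M * N) Z = mobius M (mobius N Z) := by
  have h : fromRows (mobiusNum (M * N) Z) (mobiusDenom (M * N) Z) =
      fromRows (mobiusNum M (mobius N Z) * mobiusDenom N Z)
        (mobiusDenom M (mobius N Z) * mobiusDenom N Z) := by
    rw [← fromRows_mul, ← mul_frame, ← mul_frame, Matrix.mul_assoc, Matrix.mul_assoc,
      frame_mobius_mul N hZ]
  obtain ⟨hnum, hdenom⟩ := fromRows_inj h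
  rw [mobius, hnum, hdenom, Matrix.mul_inv_rev, ← mul_assoc, mul_nonsing_inv_cancel_right _ _ hZ]
  rfl

lemma mobius_fromBlocks_diagonal (U V Z : Matrix l l R) :
    mobius (fromBlocks U 0 0 V) Z = U * Z * V⁻¹ := by
  simp [mobius, mobiusNum, mobiusDenom]

lemma isUnit_det_mobiusDenom_map (f : R →+* S) {M : Matrix (l ⊕ l) (l ⊕ l) R} {Z : Matrix l l R}
    (hZ : IsUnit (mobiusDenom M Z).det) : IsUnit (mobiusDenom (M.map f) (Z.map f)).det := by
  rw [mobiusDenom_map, ← RingHom.mapMatrix_apply, ← RingHom.map_det]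
  exact hZ.map f

lemma mobius_map (f : R →+* S) {M : Matrix (l ⊕ l) (l ⊕ l) R} {Z : Matrix l l R}
    (hZ : IsUnit (mobiusDenom M Z).det) : mobius (M.map f) (Z.map f) = (mobius M Z).map f := by
  have hinv : ((mobiusDenom M Z).map f)⁻¹ = (mobiusDenom M Z)⁻¹.map f :=
    inv_eq_right_inv <| by
      rw [← Matrix.map_mul, mul_nonsing_inv _ hZ, Matrix.map_one _ f.map_zero f.map_one]
  rw [mobius, mobiusNum_map, mobiusDenom_map, hinv, ← Matrix.map_mul, mobius]

lemma transpose_fromRows_mul_J_mul_fromRows (A B C D : Matrix l l R) :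
    (fromRows A B)ᵀ * J l R * fromRows C D = Bᵀ * C - Aᵀ * D := by
  rw [transpose_fromRows, J, fromCols_mul_fromBlocks, fromCols_mul_fromRows]
  simp only [mul_zero, mul_one, mul_neg, zero_add, add_zero, neg_mul, sub_eq_add_neg]

-- The symplectic form of `[Y; 1]` and `[X; 1]` is `X - Y`, and `M` preserves this form.
lemma transpose_mobiusDenom_mul_mobiusNum_sub {M : Matrix (l ⊕ l) (l ⊕ l) R}
    (hM : M ∈ symplecticGroup l R) (X : Matrix l l R) {Y : Matrix l l R} (hY : Y.IsSymm) :
    (mobiusDenom M Y)ᵀ * mobiusNum M X - (mobiusNum M Y)ᵀ * mobiusDenom M X = X - Y := by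
  calc _ = (frame Y)ᵀ * (Mᵀ * J l R * M) * frame X := by
        rw [← transpose_fromRows_mul_J_mul_fromRows, ← mul_frame, ← mul_frame, transpose_mul]
        simp only [Matrix.mul_assoc]
    _ = X - Y := by
        rw [mem_iff'.1 hM, frame, frame, transpose_fromRows_mul_J_mul_fromRows, hY.eq,
          transpose_one, one_mul, mul_one]

lemma mobius_isSymm {M : Matrix (l ⊕ l) (l ⊕ l) R} (hM : M ∈ symplecticGroup l R)
    {Z : Matrix l l R} (hZ : Z.IsSymm) (hdenom : IsUnit (mobiusDenom M Z).det) :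
    (mobius M Z).IsSymm := by
  have hcomm : (mobiusDenom M Z)ᵀ * mobiusNum M Z = (mobiusNum M Z)ᵀ * mobiusDenom M Z := by
    rw [← sub_eq_zero, transpose_mobiusDenom_mul_mobiusNum_sub hM Z hZ, sub_self]
  have hdenom' : IsUnit (mobiusDenom M Z)ᵀ.det := by rwa [det_transpose]
  calc (mobius M Z)ᵀ = (mobiusDenom M Z)ᵀ⁻¹ * (mobiusNum M Z)ᵀ := by
        rw [mobius, transpose_mul, transpose_nonsing_inv]
    _ = (mobiusDenom M Z)ᵀ⁻¹ * ((mobiusNum M Z)ᵀ * mobiusDenom M Z) * (mobiusDenom M Z)⁻¹ := by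
        rw [← mul_assoc, mul_nonsing_inv_cancel_right _ _ hdenom]
    _ = mobius M Z := by
        rw [← hcomm, nonsing_inv_mul_cancel_left _ _ hdenom', mobius]

lemma mobius_sub_mobius {M : Matrix (l ⊕ l) (l ⊕ l) R} (hM : M ∈ symplecticGroup l R)
    {X Y : Matrix l l R} (hY : Y.IsSymm) (hdX : IsUnit (mobiusDenom M X).det)
    (hdY : IsUnit (mobiusDenom M Y).det) :
    mobius M X - mobius M Y = (mobiusDenom M Y)ᵀ⁻¹ * (X - Y) * (mobiusDenom M X)⁻¹ := by
  have hdY' : IsUnit (mobiusDenom M Y)ᵀ.det := by rwa [det_transpose]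
  rw [← transpose_mobiusDenom_mul_mobiusNum_sub hM X hY, mul_sub, sub_mul,
    nonsing_inv_mul_cancel_left _ _ hdY', ← mul_assoc, mul_nonsing_inv_cancel_right _ _ hdX,
    ← transpose_nonsing_inv, ← transpose_mul, ← mobius, ← mobius, (mobius_isSymm hM hY hdY).eq]

lemma charpoly_matrixCrossRatio_mobius {M : Matrix (l ⊕ l) (l ⊕ l) R}
    (hM : M ∈ symplecticGroup l R) {X Y A B : Matrix l l R} (hA : A.IsSymm) (hB : B.IsSymm)
    (hdX : IsUnit (mobiusDenom M X).det) (hdY : IsUnit (mobiusDenom M Y).det)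
    (hdA : IsUnit (mobiusDenom M A).det) (hdB : IsUnit (mobiusDenom M B).det) :
    (matrixCrossRatio (mobius M X) (mobius M Y) (mobius M A) (mobius M B)).charpoly =
      (matrixCrossRatio X Y A B).charpoly := by
  have hdA' : IsUnit (mobiusDenom M A)ᵀ.det := by rwa [det_transpose]
  have hdB' : IsUnit (mobiusDenom M B)ᵀ.det := by rwa [det_transpose]
  have hconj : matrixCrossRatio (mobius M X) (mobius M Y) (mobius M A) (mobius M B) =
      (mobiusDenom M A)ᵀ⁻¹ * matrixCrossRatio X Y A B * (mobiusDenom M A)ᵀ := by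
    simp only [matrixCrossRatio, mobius_sub_mobius hM hA hdX hdA, mobius_sub_mobius hM hB hdX hdB,
      mobius_sub_mobius hM hB hdY hdB, mobius_sub_mobius hM hA hdY hdA, Matrix.mul_inv_rev,
      nonsing_inv_nonsing_inv _ hdX, nonsing_inv_nonsing_inv _ hdY,
      nonsing_inv_nonsing_inv _ hdA', nonsing_inv_nonsing_inv _ hdB', mul_assoc,
      nonsing_inv_mul_cancel_left _ _ hdX, nonsing_inv_mul_cancel_left _ _ hdY,
      mul_nonsing_inv_cancel_left _ _ hdB']
  rw [hconj, charpoly_mul_comm, mul_nonsing_inv_cancel_left _ _ hdA']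

end Mobius

section BiSymmetric

variable {K L : Type*} [Field K] [NeZero (2 : K)] [Field L] [NeZero (2 : L)]

/-- The ring embedding sending `(a, b)` to the bi-symmetric matrix `[[t, s], [s, t]]` with
eigenvalues `t + s = a` and `t - s = b`. -/
def biSymm : K × K →+* Matrix (Fin 2) (Fin 2) K where
  toFun p := !![(p.1 + p.2) / 2, (p.1 - p.2) / 2; (p.1 - p.2) / 2, (p.1 + p.2) / 2]
  map_one' := by simp [one_fin_two, one_add_one_eq_two, two_ne_zero]
  map_mul' p q := by
    ext i j; fin_cases i <;> fin_cases j <;> simp [mul_apply] <;> field_simp <;> ring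
  map_zero' := by ext i j; fin_cases i <;> fin_cases j <;> simp
  map_add' p q := by ext i j; fin_cases i <;> fin_cases j <;> simp <;> ring

lemma biSymm_apply (p : K × K) :
    biSymm p = !![(p.1 + p.2) / 2, (p.1 - p.2) / 2; (p.1 - p.2) / 2, (p.1 + p.2) / 2] :=
  rfl

lemma biSymm_isSymm (p : K × K) : (biSymm p).IsSymm := by
  ext i j; fin_cases i <;> fin_cases j <;> rfl

lemma biSymm_map (f : K →+* L) (p : K × K) : (biSymm p).map f = biSymm (f p.1, f p.2) := by
  ext i j; fin_cases i <;> fin_cases j <;> simp [biSymm_apply, map_ofNat]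

lemma biSymm_inv {p : K × K} (h₁ : p.1 ≠ 0) (h₂ : p.2 ≠ 0) :
    (biSymm p)⁻¹ = biSymm (p.1⁻¹, p.2⁻¹) :=
  inv_eq_right_inv <| by
    rw [← map_mul, Prod.mk_mul_mk, mul_inv_cancel₀ h₁, mul_inv_cancel₀ h₂, ← Prod.one_eq_mk,
      map_one]

lemma charpoly_biSymm (p : K × K) :
    (biSymm p).charpoly =
      (Polynomial.X - Polynomial.C p.1) * (Polynomial.X - Polynomial.C p.2) := by
  have htrace : (biSymm p).trace = p.1 + p.2 := by
    simp [biSymm_apply, trace_fin_two]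
  have hdet : (biSymm p).det = p.1 * p.2 := by
    simp only [biSymm_apply, det_fin_two_of]
    field_simp
    ring
  rw [charpoly_fin_two, htrace, hdet, map_add, map_mul]
  ring

lemma charpoly_biSymm_inj {p q : K × K} :
    (biSymm p).charpoly = (biSymm q).charpoly ↔ p = q ∨ p = q.swap := by
  constructor
  · intro h
    have hroots : ({p.1, p.2} : Multiset K) = {q.1, q.2} := by
      simpa [charpoly_biSymm, Polynomial.roots_mul, Polynomial.X_sub_C_ne_zero] using
        congrArg Polynomial.roots h
    have hmem : p.1 ∈ ({q.1, q.2} : Multiset K) := hroots ▸ Multiset.mem_cons_self _ _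
    rcases (by simpa using hmem : p.1 = q.1 ∨ p.1 = q.2) with h₁ | h₁
    · exact .inl <| Prod.ext h₁ <| by simpa [h₁] using hroots
    · rw [Multiset.pair_comm q.1, h₁] at hroots
      exact .inr <| Prod.ext h₁ <| by simpa using hroots
  · rintro (rfl | rfl)
    · rfl
    · simp only [charpoly_biSymm, Prod.fst_swap, Prod.snd_swap, mul_comm]

/-- The block matrix acting on bi-symmetric matrices through the pair of 2×2 matrices `g`, `h`,
one on each eigenvalue. -/
def biSymmBlocks (g h : Matrix (Fin 2) (Fin 2) K) :
    Matrix (Fin 2 ⊕ Fin 2) (Fin 2 ⊕ Fin 2) K :=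
  fromBlocks (biSymm (g 0 0, h 0 0)) (biSymm (g 0 1, h 0 1))
    (biSymm (g 1 0, h 1 0)) (biSymm (g 1 1, h 1 1))

lemma biSymmBlocks_map (f : K →+* L) (g h : Matrix (Fin 2) (Fin 2) K) :
    (biSymmBlocks g h).map f = biSymmBlocks (g.map f) (h.map f) := by
  simp only [biSymmBlocks, fromBlocks_map, biSymm_map, map_apply]

lemma biSymmBlocks_mem_symplecticGroup (g h : SL(2, K)) :
    biSymmBlocks (g : Matrix (Fin 2) (Fin 2) K) h ∈ symplecticGroup (Fin 2) K := by
  have hg := g.det_coe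
  have hh := h.det_coe
  rw [det_fin_two] at hg hh
  simp only [biSymmBlocks, fromBlocks_mem_iff, (biSymm_isSymm _).eq, ← map_mul, ← map_sub]
  refine ⟨by rw [mul_comm], by rw [mul_comm], ?_⟩
  rw [← map_one biSymm]
  congr 1
  ext
  · simpa [mul_comm] using hg
  · simpa [mul_comm] using hh

lemma mobius_biSymmBlocks {g h : Matrix (Fin 2) (Fin 2) K} {a b : K}
    (ha : g 1 0 * a + g 1 1 ≠ 0) (hb : h 1 0 * b + h 1 1 ≠ 0) :
    mobius (biSymmBlocks g h) (biSymm (a, b)) =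
      biSymm ((g 0 0 * a + g 0 1) / (g 1 0 * a + g 1 1),
        (h 0 0 * b + h 0 1) / (h 1 0 * b + h 1 1)) := by
  simp only [mobius, mobiusNum, mobiusDenom, biSymmBlocks, toBlocks_fromBlocks₁₁,
    toBlocks_fromBlocks₁₂, toBlocks_fromBlocks₂₁, toBlocks_fromBlocks₂₂, ← map_mul, ← map_add]
  rw [biSymm_inv ha hb, ← map_mul]
  simp only [Prod.mk_mul_mk, Prod.mk_add_mk, div_eq_mul_inv]

end BiSymmetric

section UpperHalfPlane

lemma exists_sin_mul_eq_cos_mul {u v : ℂ} (h : (v * conj u).im = 0) :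
    ∃ θ : ℝ, Real.sin θ * u = Real.cos θ * v := by
  rcases eq_or_ne u 0 with rfl | hu
  · exact ⟨Real.pi / 2, by simp⟩
  · have hreal : ((v / u).re : ℂ) = v / u := by
      apply Complex.ext
      · simp
      · rw [ofReal_im, div_eq_mul_inv, Complex.inv_def, ← mul_assoc, im_mul_ofReal, h, zero_mul]
    have hcos : (Real.cos (Real.arctan (v / u).re) : ℂ) ≠ 0 :=
      ofReal_ne_zero.2 (Real.cos_arctan_pos _).ne'
    refine ⟨Real.arctan (v / u).re, ?_⟩
    have htan := congrArg ((↑) : ℝ → ℂ) (Real.tan_arctan (v / u).re)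
    rw [Real.tan_eq_sin_div_cos, hreal, ofReal_div] at htan
    field_simp at htan
    linear_combination htan

/-- The element of `SL(2, ℝ)` that rotates the hyperbolic plane by the angle `2θ` about `I`. -/
def hyperbolicRotation (θ : ℝ) : SL(2, ℝ) :=
  ⟨!![Real.cos θ, Real.sin θ; -Real.sin θ, Real.cos θ], by
    rw [det_fin_two_of]; linear_combination Real.sin_sq_add_cos_sq θ⟩

lemma specialLinearGroup_denom_ne_zero (g : SL(2, ℝ)) (z : ℍ) :
    (g 1 0 * z + g 1 1 : ℂ) ≠ 0 :=
  UpperHalfPlane.denom_ne_zero (g : GL (Fin 2) ℝ) z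

lemma smul_eq_iff_mul_denom_eq (g : SL(2, ℝ)) (z w : ℍ) :
    g • z = w ↔ (g 0 0 * z + g 0 1 : ℂ) = w * (g 1 0 * z + g 1 1) := by
  rw [UpperHalfPlane.ext_iff, UpperHalfPlane.coe_specialLinearGroup_apply]
  exact div_eq_iff (specialLinearGroup_denom_ne_zero g z)

lemma hyperbolicRotation_smul_eq_iff {θ : ℝ} {z w : ℍ} :
    hyperbolicRotation θ • z = w ↔
      Real.sin θ * (1 + w * z : ℂ) = Real.cos θ * (w - z : ℂ) := by
  rw [smul_eq_iff_mul_denom_eq]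
  simp only [hyperbolicRotation, of_apply, cons_val', cons_val_zero, cons_val_one,
    cons_val_fin_one, ofReal_neg]
  constructor <;> intro h <;> linear_combination h

lemma hyperbolicRotation_smul_I (θ : ℝ) :
    hyperbolicRotation θ • UpperHalfPlane.I = UpperHalfPlane.I := by
  rw [hyperbolicRotation_smul_eq_iff, UpperHalfPlane.coe_I, I_mul_I, sub_self, add_neg_cancel,
    mul_zero, mul_zero]

lemma exists_hyperbolicRotation_smul_eq {p q : ℍ}
    (h : dist UpperHalfPlane.I p = dist UpperHalfPlane.I q) :
    ∃ θ, hyperbolicRotation θ • p = q := by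
  have hcosh : (p.re ^ 2 + 1 + p.im ^ 2) * (2 * q.im) =
      (q.re ^ 2 + 1 + q.im ^ 2) * (2 * p.im) := by
    have hcosh_dist := congrArg Real.cosh h
    rw [UpperHalfPlane.cosh_dist', UpperHalfPlane.cosh_dist',
      div_eq_div_iff (by simp [p.im_ne_zero]) (by simp [q.im_ne_zero])] at hcosh_dist
    simpa using hcosh_dist
  have him : ((q - p : ℂ) * conj (1 + q * p : ℂ)).im = 0 := by
    simp only [map_add, map_one, map_mul, mul_im, mul_re, sub_re, sub_im, add_re, add_im, one_re,
      one_im, conj_re, conj_im, UpperHalfPlane.coe_re, UpperHalfPlane.coe_im]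
    linear_combination hcosh / 2
  obtain ⟨θ, hθ⟩ := exists_sin_mul_eq_cos_mul him
  exact ⟨θ, hyperbolicRotation_smul_eq_iff.2 hθ⟩

lemma exists_smul_eq_and_smul_eq_of_dist_eq {z z₁ w w₁ : ℍ} (h : dist z z₁ = dist w w₁) :
    ∃ g : SL(2, ℝ), g • z = w ∧ g • z₁ = w₁ := by
  obtain ⟨g, rfl⟩ := MulAction.exists_smul_eq SL(2, ℝ) UpperHalfPlane.I z
  obtain ⟨k, rfl⟩ := MulAction.exists_smul_eq SL(2, ℝ) UpperHalfPlane.I w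
  have hdist : dist UpperHalfPlane.I (g⁻¹ • z₁) = dist UpperHalfPlane.I (k⁻¹ • w₁) := by
    rw [← dist_smul g, ← dist_smul k _ (k⁻¹ • w₁), smul_inv_smul, smul_inv_smul, h]
  obtain ⟨θ, hθ⟩ := exists_hyperbolicRotation_smul_eq hdist
  refine ⟨k * hyperbolicRotation θ * g⁻¹, ?_, ?_⟩
  · rw [mul_smul, inv_smul_smul, mul_smul, hyperbolicRotation_smul_I]
  · rw [mul_smul, mul_smul, hθ, smul_inv_smul]

lemma coe_tanh_half_dist_sq (z w : ℍ) :
    ((Real.tanh (dist z w / 2) ^ 2 : ℝ) : ℂ) =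
      (z - w) * (z - conj (w : ℂ))⁻¹ * (conj (z : ℂ) - conj (w : ℂ)) * (conj (z : ℂ) - w)⁻¹ := by
  have hnum : (z - w : ℂ) * (conj (z : ℂ) - conj (w : ℂ)) = (dist (z : ℂ) w ^ 2 : ℝ) := by
    rw [← map_sub, mul_conj', Complex.dist_eq, ofReal_pow]
  have hden : (z - conj (w : ℂ)) * (conj (z : ℂ) - w) = (dist (z : ℂ) (conj w) ^ 2 : ℝ) := by
    rw [← Complex.conj_conj (w : ℂ), Complex.conj_conj (conj (w : ℂ)), ← map_sub, mul_conj',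
      Complex.dist_eq, ofReal_pow]
  rw [UpperHalfPlane.tanh_half_dist, div_pow, ofReal_div, ← hnum, ← hden, div_eq_mul_inv, mul_inv]
  ring

lemma tanh_half_dist_sq_inj {z z₁ w w₁ : ℍ} :
    Real.tanh (dist z z₁ / 2) ^ 2 = Real.tanh (dist w w₁ / 2) ^ 2 ↔ dist z z₁ = dist w w₁ := by
  have hnonneg (x y : ℍ) : 0 ≤ Real.tanh (dist x y / 2) := by
    rw [UpperHalfPlane.tanh_half_dist]; positivity
  rw [sq_eq_sq₀ (hnonneg _ _) (hnonneg _ _), Real.tanh_injective.eq_iff,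
    div_left_inj' two_ne_zero]

end UpperHalfPlane

section SiegelHat

lemma mem_Omega2_iff {M : Mat4} : M ∈ Omega2 ↔ M ∈ symplecticGroup (Fin 2) ℝ := by
  have hJ : Jmat = -J (Fin 2) ℝ := by
    rw [Jmat, J, fromBlocks_neg]
    simp only [neg_zero, neg_neg]
  rw [mem_iff', Omega2, Set.mem_ofPred_eq, hJ, mul_neg, neg_mul, neg_inj]

lemma act_eq_mobius (M : Mat4) (Z : Mat2) : act M Z = mobius (M.map ofRealHom) Z := rfl

lemma crossRatio_eq_matrixCrossRatio (Z Z₁ : Mat2) :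
    crossRatio Z Z₁ = matrixCrossRatio Z (conjM Z) Z₁ (conjM Z₁) :=
  rfl

lemma map_ofReal_map_conj {m n : Type*} (M : Matrix m n ℝ) :
    (M.map ofRealHom).map (starRingEnd ℂ) = M.map ofRealHom := by
  ext i j
  exact conj_ofReal (M i j)

lemma isUnit_det_mobiusDenom_conjM {M : Mat4} {Z : Mat2}
    (hZ : IsUnit (mobiusDenom (M.map ofRealHom) Z).det) :
    IsUnit (mobiusDenom (M.map ofRealHom) (conjM Z)).det := by
  simpa only [map_ofReal_map_conj, conjM] using isUnit_det_mobiusDenom_map (starRingEnd ℂ) hZ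

lemma act_conjM {M : Mat4} {Z : Mat2} (hZ : IsUnit (mobiusDenom (M.map ofRealHom) Z).det) :
    act M (conjM Z) = conjM (act M Z) := by
  simpa only [map_ofReal_map_conj, act_eq_mobius, conjM] using mobius_map (starRingEnd ℂ) hZ

lemma charpoly_crossRatio_act {M : Mat4} (hM : M ∈ Omega2) {Z Z₁ : Mat2} (hZ₁ : Z₁.IsSymm)
    (hdZ : IsUnit (mobiusDenom (M.map ofRealHom) Z).det)
    (hdZ₁ : IsUnit (mobiusDenom (M.map ofRealHom) Z₁).det) :
    (crossRatio (act M Z) (act M Z₁)).charpoly = (crossRatio Z Z₁).charpoly := by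
  rw [crossRatio_eq_matrixCrossRatio, ← act_conjM hdZ, ← act_conjM hdZ₁]
  have hMC := SymplecticGroup.map_mem (mem_Omega2_iff.1 hM) ofRealHom
  exact charpoly_matrixCrossRatio_mobius hMC hZ₁ (hZ₁.map _) hdZ
    (isUnit_det_mobiusDenom_conjM hdZ) hdZ₁ (isUnit_det_mobiusDenom_conjM hdZ₁)

lemma biSymm_mem_Hhat_iff {p : ℂ × ℂ} : biSymm p ∈ Hhat ↔ 0 < p.1.im ∧ 0 < p.2.im := by
  have him (a : ℂ) : (a / 2).im = a.im / 2 := div_ofNat_im a 2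
  simp only [Hhat, biSymm_apply, Set.mem_ofPred_eq, of_apply, cons_val', cons_val_zero,
    cons_val_one, cons_val_fin_one, true_and, him, add_im, sub_im, abs_lt]
  constructor <;> rintro ⟨h₁, h₂⟩ <;> constructor <;> linarith

lemma mem_Hhat_iff {Z : Mat2} : Z ∈ Hhat ↔ ∃ z w : ℍ, Z = biSymm ((z : ℂ), (w : ℂ)) := by
  constructor
  · intro hZ
    have hZp : Z = biSymm (Z 0 0 + Z 0 1, Z 0 0 - Z 0 1) := by
      ext i j
      fin_cases i <;> fin_cases j <;> simp [biSymm_apply, hZ.1, hZ.2.1]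
    obtain ⟨hz, hw⟩ := biSymm_mem_Hhat_iff.1 (hZp ▸ hZ)
    exact ⟨⟨_, hz⟩, ⟨_, hw⟩, hZp⟩
  · rintro ⟨z, w, rfl⟩
    exact biSymm_mem_Hhat_iff.2 ⟨z.im_pos, w.im_pos⟩

lemma isSymm_of_mem_Hhat {Z : Mat2} (hZ : Z ∈ Hhat) : Z.IsSymm := by
  obtain ⟨z, w, rfl⟩ := mem_Hhat_iff.1 hZ
  exact biSymm_isSymm _

-- A singular denominator would give `act M Z` the junk value `0`, which is not in `Hhat`.
lemma isUnit_det_mobiusDenom_of_act_mem {M : Mat4} {Z : Mat2} (h : act M Z ∈ Hhat) :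
    IsUnit (mobiusDenom (M.map ofRealHom) Z).det := by
  by_contra hdet
  rw [act_eq_mobius, mobius, nonsing_inv_apply_not_isUnit _ hdet, mul_zero] at h
  simpa using h.2.2

lemma act_mul (M : Mat4) {N : Mat4} (hN : N ∈ OmegaHat) {Z : Mat2} (hZ : Z ∈ Hhat) :
    act (M * N) Z = act M (act N Z) := by
  rw [act_eq_mobius, Matrix.map_mul]
  exact mobius_mul _ _ (isUnit_det_mobiusDenom_of_act_mem (hN.2 Z hZ))

lemma mul_mem_OmegaHat {M N : Mat4} (hM : M ∈ OmegaHat) (hN : N ∈ OmegaHat) :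
    M * N ∈ OmegaHat :=
  ⟨mem_Omega2_iff.2 (mul_mem (mem_Omega2_iff.1 hM.1) (mem_Omega2_iff.1 hN.1)),
    fun Z hZ ↦ act_mul M hN hZ ▸ hM.2 _ (hN.2 Z hZ)⟩

lemma crossRatio_biSymm (z w z₁ w₁ : ℍ) :
    crossRatio (biSymm ((z : ℂ), (w : ℂ))) (biSymm ((z₁ : ℂ), (w₁ : ℂ))) =
      biSymm (((Real.tanh (dist z z₁ / 2) ^ 2 : ℝ) : ℂ),
        ((Real.tanh (dist w w₁ / 2) ^ 2 : ℝ) : ℂ)) := by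
  have hne (x y : ℍ) : (x : ℂ) - conj (y : ℂ) ≠ 0 := fun h ↦ by
    have him := congrArg im h
    simp only [sub_im, conj_im, sub_neg_eq_add, zero_im] at him
    exact (add_pos x.im_pos y.im_pos).ne' him
  have hne' (x y : ℍ) : conj (x : ℂ) - y ≠ 0 := fun h ↦ by
    refine hne y x ?_
    rw [← neg_sub, h, neg_zero]
  simp only [crossRatio, conjM, biSymm_map, ← map_sub, Prod.mk_sub_mk]
  rw [biSymm_inv (hne _ _) (hne _ _), biSymm_inv (hne' _ _) (hne' _ _), ← map_mul, ← map_mul,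
    ← map_mul, coe_tanh_half_dist_sq, coe_tanh_half_dist_sq]
  simp only [Prod.mk_mul_mk, map_sub]

lemma act_biSymmBlocks (g h : SL(2, ℝ)) (z w : ℍ) :
    act (biSymmBlocks (g : Mat2R) (h : Mat2R)) (biSymm ((z : ℂ), (w : ℂ))) =
      biSymm (((g • z : ℍ) : ℂ), ((h • w : ℍ) : ℂ)) := by
  rw [act_eq_mobius, biSymmBlocks_map, mobius_biSymmBlocks (specialLinearGroup_denom_ne_zero g z)
    (specialLinearGroup_denom_ne_zero h w), UpperHalfPlane.coe_specialLinearGroup_apply,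
    UpperHalfPlane.coe_specialLinearGroup_apply]
  rfl

lemma biSymmBlocks_mem_OmegaHat (g h : SL(2, ℝ)) :
    biSymmBlocks (g : Mat2R) (h : Mat2R) ∈ OmegaHat := by
  refine ⟨mem_Omega2_iff.2 (biSymmBlocks_mem_symplecticGroup g h), fun Z hZ ↦ ?_⟩
  obtain ⟨z, w, rfl⟩ := mem_Hhat_iff.1 hZ
  exact mem_Hhat_iff.2 ⟨g • z, h • w, act_biSymmBlocks g h z w⟩

/-- The matrix of `Ω̂₂` acting as conjugation by `diag(1, -1)`, which exchanges the two eigenvalues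
of a bi-symmetric matrix. -/
def swapBlocks : Mat4 := fromBlocks (diagonal ![1, -1]) 0 0 (diagonal ![1, -1])

lemma act_swapBlocks (p : ℂ × ℂ) : act swapBlocks (biSymm p) = biSymm p.swap := by
  have hmap : (diagonal ![1, -1] : Mat2R).map ofRealHom = diagonal ![1, -1] := by
    ext i j; fin_cases i <;> fin_cases j <;> simp
  have hinv : (diagonal ![1, -1] : Mat2)⁻¹ = diagonal ![1, -1] :=
    inv_eq_right_inv <| by ext i j; fin_cases i <;> fin_cases j <;> simp
  rw [act_eq_mobius, swapBlocks, fromBlocks_map, hmap, Matrix.map_zero _ ofRealHom.map_zero,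
    mobius_fromBlocks_diagonal, hinv]
  ext i j
  fin_cases i <;> fin_cases j <;> simp [biSymm_apply] <;> ring

lemma swapBlocks_mem_OmegaHat : swapBlocks ∈ OmegaHat := by
  refine ⟨mem_Omega2_iff.2 ?_, fun Z hZ ↦ ?_⟩
  · rw [swapBlocks, fromBlocks_mem_iff]
    simp only [diagonal_transpose, transpose_zero, mul_zero, zero_mul, sub_zero, true_and,
      diagonal_mul_diagonal, diagonal_eq_one]
    ext i; fin_cases i <;> simp
  · obtain ⟨z, w, rfl⟩ := mem_Hhat_iff.1 hZ
    exact mem_Hhat_iff.2 ⟨w, z, act_swapBlocks _⟩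

lemma exists_mem_OmegaHat_of_dist_eq {z z₁ w w₁ x x₁ y y₁ : ℍ} (hx : dist z z₁ = dist x x₁)
    (hy : dist w w₁ = dist y y₁) :
    ∃ M ∈ OmegaHat, act M (biSymm ((z : ℂ), (w : ℂ))) = biSymm ((x : ℂ), (y : ℂ)) ∧
      act M (biSymm ((z₁ : ℂ), (w₁ : ℂ))) = biSymm ((x₁ : ℂ), (y₁ : ℂ)) := by
  obtain ⟨g, rfl, rfl⟩ := exists_smul_eq_and_smul_eq_of_dist_eq hx
  obtain ⟨h, rfl, rfl⟩ := exists_smul_eq_and_smul_eq_of_dist_eq hy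
  exact ⟨_, biSymmBlocks_mem_OmegaHat g h, act_biSymmBlocks g h z w, act_biSymmBlocks g h z₁ w₁⟩

lemma exists_mem_OmegaHat_of_dist_eq_swap {z z₁ w w₁ x x₁ y y₁ : ℍ} (hy : dist z z₁ = dist y y₁)
    (hx : dist w w₁ = dist x x₁) :
    ∃ M ∈ OmegaHat, act M (biSymm ((z : ℂ), (w : ℂ))) = biSymm ((x : ℂ), (y : ℂ)) ∧
      act M (biSymm ((z₁ : ℂ), (w₁ : ℂ))) = biSymm ((x₁ : ℂ), (y₁ : ℂ)) := by
  obtain ⟨M, hM, hact, hact₁⟩ := exists_mem_OmegaHat_of_dist_eq hy hx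
  refine ⟨swapBlocks * M, mul_mem_OmegaHat swapBlocks_mem_OmegaHat hM, ?_, ?_⟩
  · rw [act_mul _ hM (mem_Hhat_iff.2 ⟨z, w, rfl⟩), hact, act_swapBlocks, Prod.swap_prod_mk]
  · rw [act_mul _ hM (mem_Hhat_iff.2 ⟨z₁, w₁, rfl⟩), hact₁, act_swapBlocks, Prod.swap_prod_mk]

lemma charpoly_crossRatio_biSymm_eq_iff {z w z₁ w₁ x y x₁ y₁ : ℍ} :
    (crossRatio (biSymm ((z : ℂ), (w : ℂ))) (biSymm ((z₁ : ℂ), (w₁ : ℂ)))).charpoly =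
        (crossRatio (biSymm ((x : ℂ), (y : ℂ))) (biSymm ((x₁ : ℂ), (y₁ : ℂ)))).charpoly ↔
      dist z z₁ = dist x x₁ ∧ dist w w₁ = dist y y₁ ∨
        dist z z₁ = dist y y₁ ∧ dist w w₁ = dist x x₁ := by
  simp only [crossRatio_biSymm, charpoly_biSymm_inj, Prod.swap_prod_mk, Prod.mk.injEq, ofReal_inj,
    tanh_half_dist_sq_inj]

end SiegelHat

/-- a symplectic transformation in `Ω̂₂` taking `(Z, Z₁)` to
`(W, W₁)` exists iff the cross ratios `𝔯(Z,Z₁)` and `𝔯(W,W₁)` have the same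
eigenvalues (the same characteristic polynomial). -/
theorem stmt_10 (Z Z₁ W W₁ : Mat2)
    (hZ : Z ∈ Hhat) (hZ₁ : Z₁ ∈ Hhat) (hW : W ∈ Hhat) (hW₁ : W₁ ∈ Hhat) :
    (∃ M ∈ OmegaHat, act M Z = W ∧ act M Z₁ = W₁) ↔
      (crossRatio Z Z₁).charpoly = (crossRatio W W₁).charpoly := by
  constructor
  · rintro ⟨M, hM, rfl, rfl⟩
    exact (charpoly_crossRatio_act hM.1 (isSymm_of_mem_Hhat hZ₁)
      (isUnit_det_mobiusDenom_of_act_mem hW) (isUnit_det_mobiusDenom_of_act_mem hW₁)).symm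
  · intro h
    obtain ⟨z, w, rfl⟩ := mem_Hhat_iff.1 hZ
    obtain ⟨z₁, w₁, rfl⟩ := mem_Hhat_iff.1 hZ₁
    obtain ⟨x, y, rfl⟩ := mem_Hhat_iff.1 hW
    obtain ⟨x₁, y₁, rfl⟩ := mem_Hhat_iff.1 hW₁
    rcases charpoly_crossRatio_biSymm_eq_iff.1 h with ⟨hx, hy⟩ | ⟨hy, hx⟩
    · exact exists_mem_OmegaHat_of_dist_eq hx hy
    · exact exists_mem_OmegaHat_of_dist_eq_swap hy hx
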